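/- Let f be a homeomorphism of the open annulus 𝔸 = 𝕋¹ × ℝ which is isotopic to the identity and preserves a Borel probability measure of full support, and let f̌ be a lift of f to ℝ². If the rotation set rot(f̌) is reduced to a single rational number r/s, where r and s are integers with s ≥ 1 and gcd(|r|, s) = 1, then there exists a point ž ∈ ℝ² with f̌^s(ž) = ž + (r,0). -/

import Mathlib

open MeasureTheory Filter Topology Set

noncomputable section

/-- The circle `𝕋¹ = ℝ/ℤ`. -/
abbrev T1 : Type := AddCircle (1 : ℝ)

/-- The open annulus `𝔸 = 𝕋¹ × ℝ`. -/
abbrev Ann : Type := T1 × ℝ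

/-- The universal covering map `π : ℝ² → 𝔸`, `π(x,y) = (x + ℤ, y)`. -/
def pA : ℝ × ℝ → Ann := fun z => ((z.1 : T1), z.2)

/-- An open topological disk of `𝔸`: a nonempty open connected simply connected subset. -/
def IsOpenTopDisk (U : Set Ann) : Prop :=
  IsOpen U ∧ IsConnected U ∧ SimplyConnectedSpace U

/-- `f` is isotopic to the identity. -/
def IsotopicToId (f : Ann ≃ₜ Ann) : Prop :=
  ∃ H : ℝ × Ann → Ann, ContinuousOn H (Set.Icc (0:ℝ) 1 ×ˢ Set.univ) ∧
    (∀ z, H (0, z) = z) ∧ (∀ z, H (1, z) = f z) ∧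
    ∀ t ∈ Set.Icc (0:ℝ) 1, ∃ g : Ann ≃ₜ Ann, ∀ z, H (t, z) = g z

/-- `μ` is an `f`-invariant Borel probability measure of full support. -/
def InvariantFullMeasure (f : Ann ≃ₜ Ann) (μ : Measure Ann) : Prop :=
  IsProbabilityMeasure μ ∧ Measure.map f μ = μ ∧
    ∀ U : Set Ann, IsOpen U → U.Nonempty → 0 < μ U

/-- `fc` is a lift of `f` to the universal covering `ℝ²`. -/
def IsLift (f : Ann ≃ₜ Ann) (fc : (ℝ × ℝ) ≃ₜ (ℝ × ℝ)) : Prop :=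
  ∀ z, pA (fc z) = f (pA z)

/-- The rotation set of `fc` relative to a compact set `K`. -/
def rotK (fc : (ℝ × ℝ) ≃ₜ (ℝ × ℝ)) (K : Set Ann) : Set EReal :=
  {ρ | ∃ (z : ℕ → ℝ × ℝ) (n : ℕ → ℕ), Tendsto n atTop atTop ∧
    (∀ k, pA (z k) ∈ K ∧ pA ((⇑fc)^[n k] (z k)) ∈ K) ∧
    Tendsto (fun k => (((((⇑fc)^[n k] (z k)).1 - (z k).1) / (n k) : ℝ) : EReal))
      atTop (nhds ρ)}

/-- The rotation set of `fc`. -/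
def rot (fc : (ℝ × ℝ) ≃ₜ (ℝ × ℝ)) : Set EReal :=
  closure (⋃ (K : Set Ann) (_ : IsCompact K), rotK fc K)

/-- Alternative `(1)` in Theorems A and B: existence of non-contractible
periodic points of arbitrarily large prime period. -/
def NonContractibleAlt (fc : (ℝ × ℝ) ≃ₜ (ℝ × ℝ)) : Prop :=
  ∃ q : ℕ, 1 ≤ q ∧ ∀ r s : ℕ, 0 < r → 0 < s → Nat.Coprime r s → (r : ℝ) / s ≤ 1 / q →
    (∃ z : ℝ × ℝ, (⇑fc)^[s] z + ((r : ℝ), 0) = z) ∨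
    (∃ z : ℝ × ℝ, (⇑fc)^[s] z - ((r : ℝ), 0) = z)

theorem bb_logLift {E : Type*} [NormedAddCommGroup E] [NormedSpace ℝ E] {S : Set E}
    (hS : Convex ℝ S) (hne : S.Nonempty) {F : E → ℂ} (hF : ContinuousOn F S)
    (h0 : ∀ a ∈ S, F a ≠ 0) :
    ∃ L : E → ℂ, ContinuousOn L S ∧ ∀ a ∈ S, Complex.exp (L a) = F a := by
  obtain ⟨a0, ha0⟩ := hne
  have mem : ∀ p : unitInterval × S, a0 + (p.1 : ℝ) • ((p.2 : E) - a0) ∈ S := fun p =>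
    hS.add_smul_sub_mem ha0 p.2.2 p.1.2
  let H : C(unitInterval × S, {z : ℂ // z ≠ 0}) :=
    ⟨fun p => ⟨F (a0 + (p.1 : ℝ) • ((p.2 : E) - a0)), h0 _ (mem p)⟩, by
      refine Continuous.subtype_mk ?_ _
      exact hF.comp_continuous (by fun_prop) mem⟩
  let f : C(S, ℂ) := ⟨fun _ => Complex.log (F a0), continuous_const⟩
  have H0 : ∀ a, H (0, a) = (⟨Complex.exp (f a), Complex.exp_ne_zero _⟩ : {z : ℂ // z ≠ 0}) := by
    intro a
    apply Subtype.ext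
    simp [H, f, Complex.exp_log (h0 a0 ha0)]
  let Lt := Complex.isCoveringMap_exp.liftHomotopy H f H0
  have hl : ∀ p, Complex.exp (Lt p) = (H p : ℂ) := by
    intro p
    have := congrFun (Complex.isCoveringMap_exp.liftHomotopy_lifts H f H0) p
    exact congrArg Subtype.val this
  classical
  refine ⟨fun a => if h : a ∈ S then Lt (1, ⟨a, h⟩) else 0, ?_, ?_⟩
  · rw [continuousOn_iff_continuous_domRestrict]
    have : S.domRestrict (fun a => if h : a ∈ S then Lt (1, ⟨a, h⟩) else 0) = fun a => Lt (1, a) := by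
      ext a; simp [Set.domRestrict]
    rw [this]
    exact Lt.continuous.comp (by fun_prop)
  · intro a ha
    simp [ha, hl, H]

theorem bb_const {X : Type*} [TopologicalSpace X] {S : Set X} (hS : IsPreconnected S)
    {L1 L2 : X → ℂ} (h1 : ContinuousOn L1 S) (h2 : ContinuousOn L2 S) (C : ℂ)
    (h : ∀ a ∈ S, Complex.exp (L1 a) = C * Complex.exp (L2 a)) {a b : X} (ha : a ∈ S)
    (hb : b ∈ S) : L1 a - L2 a = L1 b - L2 b := by
  have : PreconnectedSpace S := Subtype.preconnectedSpace hS
  have e := Complex.isCoveringMap_exp.eq_of_comp_eq (A := S)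
    (g₁ := fun s => L1 s - L2 s) (g₂ := fun _ => L1 b - L2 b)
    ((continuousOn_iff_continuous_domRestrict.1 h1).sub (continuousOn_iff_continuous_domRestrict.1 h2))
    continuous_const ?_ ⟨b, hb⟩ rfl
  · exact congrFun e ⟨a, ha⟩
  · ext s
    simp only [Function.comp]
    rw [Complex.exp_sub, Complex.exp_sub, h s s.2, h b hb]
    field_simp [Complex.exp_ne_zero]

/-- symmetric lift of the angle variation of pairs -/
def bbP (g : ℂ → ℂ) : Prop :=
  ∃ R : ℂ × ℂ → ℂ, ContinuousOn R {p | p.1 ≠ p.2} ∧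
    (∀ x y, x ≠ y → Complex.exp (R (x, y)) * (y - x) = g y - g x) ∧
    ∀ x y, x ≠ y → R (x, y) = R (y, x)

theorem bbP_comp {f g : ℂ → ℂ} (hf : bbP f) (hg : bbP g) (hgc : Continuous g)
    (hgi : Function.Injective g) : bbP (f ∘ g) := by
  obtain ⟨R, hR, hR1, hR2⟩ := hf
  obtain ⟨Q, hQ, hQ1, hQ2⟩ := hg
  refine ⟨fun p => R (g p.1, g p.2) + Q p, ?_, ?_, ?_⟩
  · refine ContinuousOn.add (hR.comp (by fun_prop) ?_) hQ
    intro p hp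
    exact fun h => hp (hgi h)
  · intro x y h
    have := hR1 _ _ (fun h' => h (hgi h') : g x ≠ g y)
    rw [Function.comp, Function.comp, ← this, ← hQ1 x y h, Complex.exp_add]; ring
  · intro x y h
    simp only
    rw [hR2 _ _ (fun h' => h (hgi h') : g x ≠ g y), hQ2 x y h]

theorem bbP_add (w : ℂ) : bbP (fun z => z + w) :=
  ⟨fun _ => 0, continuousOn_const, by intro x y _; simp, by simp⟩

theorem bbP_id : bbP id :=
  ⟨fun _ => 0, continuousOn_const, by intro x y _; simp, by simp⟩

theorem bbP_iterate {g : ℂ → ℂ} (hg : bbP g) (hgc : Continuous g)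
    (hgi : Function.Injective g) (n : ℕ) : bbP (g^[n]) := by
  induction n with
  | zero => exact bbP_id
  | succ n ih => rw [Function.iterate_succ]; exact bbP_comp ih hg hgc hgi

theorem bb_core (G : ℂ → ℂ) (hGc : Continuous G) (hP : bbP G) (hfix : ∀ z, G z ≠ z)
    (γ : ℝ → ℂ) (hγ : Continuous γ) (hs : ∀ t, γ (t + 1) = G (γ t)) (T : ℝ) (hT : 1 < T)
    (hcl : γ T = γ 0)
    (hinj : ∀ s t, 0 ≤ s → s < t → t ≤ T → t - s < T → γ s ≠ γ t)
    (hbox : ∀ s t, T - 1 ≤ s → s ≤ 1 → T ≤ t → t ≤ 2 → γ s ≠ γ t) : False := by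
  obtain ⟨R, hR, hR1, hR2⟩ := hP
  -- domain
  let D0 : Set (ℝ × ℝ) := {p | 0 ≤ p.1 ∧ p.1 < p.2 ∧ p.2 ≤ T ∧ p.2 - p.1 < T}
  let F : ℝ × ℝ → ℂ := fun p => γ p.2 - γ p.1
  have hFc : Continuous F := by fun_prop
  have hD0 : Convex ℝ D0 := by
    rintro ⟨a, b⟩ ⟨h1, h2, h3, h4⟩ ⟨c, d⟩ ⟨k1, k2, k3, k4⟩ u v hu hv huv
    have hv' : v = 1 - u := by linarith
    subst hv'
    simp only [D0, mem_ofPred_eq, Prod.smul_mk, Prod.mk_add_mk, smul_eq_mul] at *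
    rcases hu.eq_or_lt with rfl | hu
    · simp; exact ⟨k1, k2, k3, k4⟩
    · refine ⟨by positivity, ?_, ?_, ?_⟩ <;> nlinarith
  obtain ⟨L1, hL1, hL1e⟩ := bb_logLift hD0 ⟨(0, 1), by simp only [D0, mem_ofPred_eq]; refine ⟨?_, ?_, ?_, ?_⟩ <;> linarith⟩ hFc.continuousOn
    (by rintro ⟨s, t⟩ ⟨h1, h2, h3, h4⟩; exact sub_ne_zero.2 (hinj s t h1 h2 h3 h4).symm)
  obtain ⟨θ, hθ, hθe⟩ := bb_logLift (S := (univ : Set ℂ)) convex_univ ⟨0, trivial⟩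
    (F := fun z => G z - z) (by fun_prop) (fun a _ => sub_ne_zero.2 (hfix a))
  rw [continuousOn_univ] at hθ
  replace hθe : ∀ z, Complex.exp (θ z) = G z - z := fun z => hθe z trivial
  let L2 : ℝ × ℝ → ℂ := fun p => L1 (p.1 - 1, p.2 - 1) + R (γ (p.1 - 1), γ (p.2 - 1))
  let D1 : Set (ℝ × ℝ) := {p | 1 ≤ p.1 ∧ p.1 < p.2 ∧ p.2 ≤ T + 1 ∧ p.2 - p.1 < T}
  have hD1m : ∀ p ∈ D1, (p.1 - 1, p.2 - 1) ∈ D0 := by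
    rintro ⟨s, t⟩ ⟨h1, h2, h3, h4⟩
    simp only [D0, mem_ofPred_eq] at *
    refine ⟨?_, ?_, ?_, ?_⟩ <;> linarith
  have hne : ∀ p ∈ D0, γ p.1 ≠ γ p.2 := by
    rintro ⟨s, t⟩ ⟨h1, h2, h3, h4⟩; exact (hinj s t h1 h2 h3 h4)
  have hL2 : ContinuousOn L2 D1 := by
    refine ContinuousOn.add (hL1.comp (by fun_prop) hD1m) (hR.comp (by fun_prop) ?_)
    intro p hp
    exact hne _ (hD1m p hp)
  have hL2e : ∀ p ∈ D1, Complex.exp (L2 p) = F p := by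
    intro p hp
    have := hR1 _ _ (hne _ (hD1m p hp))
    simp only [L2, Complex.exp_add, hL1e _ (hD1m p hp), F]
    have e1 := hs (p.1 - 1)
    have e2 := hs (p.2 - 1)
    simp only [sub_add_cancel] at e1 e2
    rw [e1, e2, ← this]; ring
  -- M
  have hM : ∀ s, s ∈ Ioo 0 T → L1 (s, T) - L1 (0, s) = L1 (1, T) - L1 (0, 1) := by
    intro s hs'
    refine bb_const (S := Ioo 0 T) isPreconnected_Ioo (L1 := fun s => L1 (s, T))
      (L2 := fun s => L1 (0, s)) (hL1.comp (by fun_prop) ?_) (hL1.comp (by fun_prop) ?_) (-1) ?_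
      hs' ⟨by linarith, hT⟩
    · rintro s ⟨h1, h2⟩; simp only [D0, mem_ofPred_eq]; refine ⟨?_, ?_, ?_, ?_⟩ <;> linarith
    · rintro s ⟨h1, h2⟩; simp only [D0, mem_ofPred_eq]; refine ⟨?_, ?_, ?_, ?_⟩ <;> linarith
    · rintro s ⟨h1, h2⟩
      rw [hL1e, hL1e]
      · simp [F, hcl]
      all_goals simp only [D0, mem_ofPred_eq]; refine ⟨?_, ?_, ?_, ?_⟩ <;> linarith
  have hMe : Complex.exp (L1 (1, T) - L1 (0, 1)) = -1 := by
    have hm := hinj 0 1 le_rfl one_pos hT.le (by linarith)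
    rw [Complex.exp_sub, hL1e, hL1e]
    · simp only [F, hcl]
      rw [div_eq_iff (sub_ne_zero.2 hm.symm)]; ring
    all_goals simp only [D0, mem_ofPred_eq]; refine ⟨?_, ?_, ?_, ?_⟩ <;> linarith
  have hM2 : L2 (T, T + 1) - L2 (1, T) = L1 (1, T) - L1 (0, 1) := by
    rw [← hM (T - 1) ⟨by linarith, by linarith⟩]
    have : γ 0 ≠ γ (T - 1) := hinj 0 (T - 1) le_rfl (by linarith) (by linarith) (by linarith)
    simp only [L2, add_sub_cancel_right, sub_self, hcl]
    rw [hR2 _ _ this]; ring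
  -- overlap
  have hθ1 : ∀ t, 0 ≤ t → t ≤ T - 1 → θ (γ t) - L1 (t, t + 1) = θ (γ 0) - L1 (0, 1) := by
    intro t h1 h2
    have hm : ∀ s ∈ Icc 0 (T - 1), (s, s + 1) ∈ D0 := by
      rintro s ⟨h1, h2⟩; simp only [D0, mem_ofPred_eq]; refine ⟨?_, ?_, ?_, ?_⟩ <;> linarith
    have := bb_const (S := Icc 0 (T - 1)) isPreconnected_Icc (L1 := fun s => θ (γ s))
      (L2 := fun s => L1 (s, s + 1)) (by fun_prop) (hL1.comp (by fun_prop) hm) 1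
      (by intro s hs'; rw [hθe, hL1e _ (hm s hs')]; simp [F, hs]) (a := t) (b := 0)
      ⟨h1, h2⟩ ⟨le_rfl, by linarith⟩
    simpa using this
  have hθ2 : ∀ t, 1 ≤ t → t ≤ T → θ (γ t) - L2 (t, t + 1) = θ (γ T) - L2 (T, T + 1) := by
    intro t h1 h2
    have hm : ∀ s ∈ Icc 1 T, (s, s + 1) ∈ D1 := by
      rintro s ⟨h1, h2⟩; simp only [D1, mem_ofPred_eq]; refine ⟨?_, ?_, ?_, ?_⟩ <;> linarith
    exact bb_const (S := Icc 1 T) isPreconnected_Icc (L1 := fun s => θ (γ s))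
      (L2 := fun s => L2 (s, s + 1)) (by fun_prop) (hL2.comp (by fun_prop) hm) 1
      (by intro s hs'; rw [hθe, hL2e _ (hm s hs')]; simp [F, hs]) (a := t) (b := T)
      ⟨h1, h2⟩ ⟨hT.le, le_rfl⟩
  have key : θ (γ 1) - L2 (1, 2) - (θ (γ 0) - L1 (0, 1)) = L1 (1, T) - L2 (1, T) := by
    rcases le_or_gt 2 T with h2 | h2
    · have a1 := hθ1 1 (by norm_num) (by linarith)
      norm_num at a1
      have a2 := bb_const (S := Ioc 1 T) isPreconnected_Ioc (L1 := fun t => L1 (1, t))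
        (L2 := fun t => L2 (1, t)) (hL1.comp (by fun_prop) ?_) (hL2.comp (by fun_prop) ?_) 1 ?_
        (a := 2) (b := T) ⟨by norm_num, h2⟩ ⟨hT, le_rfl⟩
      · rw [← a2, ← a1]; ring
      · rintro s ⟨h1, h2⟩; simp only [D0, mem_ofPred_eq]; refine ⟨?_, ?_, ?_, ?_⟩ <;> linarith
      · rintro s ⟨h1, h2⟩; simp only [D1, mem_ofPred_eq]; refine ⟨?_, ?_, ?_, ?_⟩ <;> linarith
      · rintro s ⟨h1, h2⟩
        rw [hL1e, hL2e, one_mul]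
        · simp only [D1, mem_ofPred_eq]; refine ⟨?_, ?_, ?_, ?_⟩ <;> linarith
        · simp only [D0, mem_ofPred_eq]; refine ⟨?_, ?_, ?_, ?_⟩ <;> linarith
    · let Q : Set (ℝ × ℝ) := Icc (T - 1) 1 ×ˢ Icc T 2
      have hQ : Convex ℝ Q := (convex_Icc _ _).prod (convex_Icc _ _)
      obtain ⟨L3, hL3, hL3e⟩ := bb_logLift hQ
        ⟨(1, T), ⟨by linarith, le_rfl⟩, ⟨le_rfl, h2.le⟩⟩ hFc.continuousOn
        (by rintro ⟨s, t⟩ ⟨⟨h1, h2⟩, h3, h4⟩; exact sub_ne_zero.2 (hbox s t h1 h2 h3 h4).symm)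
      have m1 : ∀ s ∈ Icc (T - 1) 1, (s, T) ∈ D0 := by
        rintro s ⟨h1, h2⟩; simp only [D0, mem_ofPred_eq]; refine ⟨?_, ?_, ?_, ?_⟩ <;> linarith
      have m1' : ∀ s ∈ Icc (T - 1) 1, (s, T) ∈ Q := fun s hs => ⟨hs, le_rfl, h2.le⟩
      have m2 : ∀ t ∈ Icc T 2, (1, t) ∈ D1 := by
        rintro s ⟨h1, h2⟩; simp only [D1, mem_ofPred_eq]; refine ⟨?_, ?_, ?_, ?_⟩ <;> linarith
      have m2' : ∀ t ∈ Icc T 2, (1, t) ∈ Q := fun s hs => ⟨⟨by linarith, le_rfl⟩, hs⟩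
      have m3 : ∀ t ∈ Icc (T - 1) 1, (t, t + 1) ∈ Q := fun s hs =>
        ⟨hs, ⟨by linarith [hs.1], by linarith [hs.2]⟩⟩
      have b1 := bb_const (S := Icc (T - 1) 1) isPreconnected_Icc (L1 := fun s => L1 (s, T))
        (L2 := fun s => L3 (s, T)) (hL1.comp (by fun_prop) m1) (hL3.comp (by fun_prop) m1') 1
        (by intro s h; rw [hL1e _ (m1 s h), hL3e _ (m1' s h), one_mul]) (a := T - 1) (b := 1)
        ⟨le_rfl, by linarith⟩ ⟨by linarith, le_rfl⟩
      have b2 := bb_const (S := Icc T 2) isPreconnected_Icc (L1 := fun s => L2 (1, s))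
        (L2 := fun s => L3 (1, s)) (hL2.comp (by fun_prop) m2) (hL3.comp (by fun_prop) m2') 1
        (by intro s h; rw [hL2e _ (m2 s h), hL3e _ (m2' s h), one_mul]) (a := T) (b := 2)
        ⟨le_rfl, by linarith⟩ ⟨by linarith, le_rfl⟩
      have b3 := bb_const (S := Icc (T - 1) 1) isPreconnected_Icc (L1 := fun s => θ (γ s))
        (L2 := fun s => L3 (s, s + 1)) (by fun_prop) (hL3.comp (by fun_prop) m3) 1
        (by intro s h; rw [hθe, hL3e _ (m3 s h)]; simp [F, hs]) (a := T - 1) (b := 1)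
        ⟨le_rfl, by linarith⟩ ⟨by linarith, le_rfl⟩
      have b4 := hθ1 (T - 1) (by linarith) le_rfl
      simp only [sub_add_cancel] at b1 b2 b3 b4
      norm_num at b3
      linear_combination b2 - b3 + b4 + b1
  have e2 := hθ2 1 le_rfl hT.le
  norm_num at e2
  rw [hcl] at e2
  have : L1 (1, T) - L1 (0, 1) = 0 := by
    linear_combination (1/2 : ℂ) * (e2 - key - hM2)
  rw [this, Complex.exp_zero] at hMe
  norm_num at hMe

theorem bb_radius (G : ℂ ≃ₜ ℂ) (hfix : ∀ z, G z ≠ z) (z : ℂ) :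
    ∃ (x : ℂ) (r : ℝ), 0 < r ∧ dist x z = r ∧ dist (G x) z = r ∧
      (∀ v, dist v z ≤ r → r ≤ dist (G v) z) ∧ (∀ v, dist (G v) z ≤ r → r ≤ dist v z) := by
  let m : ℂ → ℝ := fun v => max (dist v z) (dist (G v) z)
  have hm : Continuous m := by fun_prop
  obtain ⟨x, hx, hmin⟩ := (isCompact_closedBall z (m z)).exists_isMinOn
    ⟨z, by simp [m]⟩ hm.continuousOn
  have hmin' : ∀ v, m x ≤ m v := by
    intro v
    by_cases hv : v ∈ Metric.closedBall z (m z)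
    · exact hmin hv
    · have h1 : m x ≤ m z := hmin (Metric.mem_closedBall_self (by simp [m]))
      have h2 : m z < dist v z := by simpa using hv
      exact h1.trans (h2.le.trans (le_max_left _ _))
  have hr : 0 < m x := by
    rcases (show (0:ℝ) ≤ m x from le_max_of_le_left dist_nonneg).eq_or_lt with h | h
    · exfalso
      have h1 : dist x z ≤ 0 := h ▸ le_max_left _ _
      have h2 : dist (G x) z ≤ 0 := h ▸ le_max_right _ _
      rw [dist_le_zero] at h1 h2
      exact hfix x (h2.trans h1.symm)
    · exact h
  have A : ∀ v, dist v z ≤ m x → m x ≤ dist (G v) z := by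
    have hc : IsClosed {v | m x ≤ dist (G v) z} := isClosed_le (by fun_prop) (by fun_prop)
    have hsub : Metric.ball z (m x) ⊆ {v | m x ≤ dist (G v) z} := by
      intro v hv
      rcases le_max_iff.1 (hmin' v) with h | h
      · exact absurd h (not_le.2 hv)
      · exact h
    have := closure_minimal hsub hc
    rw [closure_ball z hr.ne'] at this
    exact fun v hv => this hv
  have B' : ∀ w, dist w z ≤ m x → m x ≤ dist (G.symm w) z := by
    have hc : IsClosed {v | m x ≤ dist (G.symm v) z} := isClosed_le (by fun_prop) (by fun_prop)
    have hsub : Metric.ball z (m x) ⊆ {v | m x ≤ dist (G.symm v) z} := by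
      intro v hv
      rcases le_max_iff.1 (hmin' (G.symm v)) with h | h
      · exact h
      · rw [G.apply_symm_apply] at h
        exact absurd h (not_le.2 hv)
    have := closure_minimal hsub hc
    rw [closure_ball z hr.ne'] at this
    exact fun v hv => this hv
  have B : ∀ v, dist (G v) z ≤ m x → m x ≤ dist v z := fun v hv => by
    simpa using B' (G v) hv
  have h1 : dist x z ≤ m x := le_max_left _ _
  have h2 : dist (G x) z ≤ m x := le_max_right _ _
  exact ⟨x, m x, hr, le_antisymm h1 (B x h2), le_antisymm h2 (A x h1), A, B⟩

theorem bb_line (G : ℂ ≃ₜ ℂ) (α : ℝ → ℂ) (hα : Continuous α) (h1 : α 1 = G (α 0)) :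
    ∃ γ : ℝ → ℂ, Continuous γ ∧ (∀ t, γ (t + 1) = G (γ t)) ∧ ∀ t ∈ Icc (0:ℝ) 1, γ t = α t := by
  let γ : ℝ → ℂ := fun t => (G ^ ⌊t⌋) (α (Int.fract t))
  have hstep : ∀ (n : ℤ) (w : ℂ), (G ^ (n + 1)) w = (G ^ n) (G w) := by
    intro n w; rw [zpow_add_one]; rfl
  have hstep' : ∀ (n : ℤ) (w : ℂ), (G ^ (n + 1)) w = G ((G ^ n) w) := by
    intro n w; rw [zpow_add_one, (Commute.refl G).zpow_left n]; rfl
  have hγn : ∀ (n : ℤ), ∀ t ∈ Icc (n : ℝ) (n + 1), γ t = (G ^ n) (α (t - n)) := by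
    rintro n t ⟨h, h'⟩
    rcases h'.lt_or_eq with h' | h'
    · have : ⌊t⌋ = n := Int.floor_eq_iff.2 ⟨h, h'⟩
      simp only [γ, Int.fract, this]
    · have e : t = ((n + 1 : ℤ) : ℝ) := by rw [h']; push_cast; ring
      simp only [γ]
      rw [e, Int.floor_intCast, Int.fract_intCast, hstep, ← h1]
      congr 2; push_cast; ring
  refine ⟨γ, ?_, ?_, ?_⟩
  · have hlf : LocallyFinite fun n : ℤ => Icc (n : ℝ) (n + 1) := by
      intro x
      refine ⟨Ioo (x - 1) (x + 1), Ioo_mem_nhds (by linarith) (by linarith), ?_⟩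
      refine (Set.finite_Icc (⌊x⌋ - 3) (⌊x⌋ + 3)).subset ?_
      rintro n ⟨y, ⟨a1, a2⟩, b1, b2⟩
      have c1 := Int.floor_le x
      have c2 := Int.lt_floor_add_one x
      constructor
      · have : ((⌊x⌋ - 3 : ℤ) : ℝ) < n := by push_cast; linarith
        exact_mod_cast this.le
      · have : (n : ℝ) < ((⌊x⌋ + 3 : ℤ) : ℝ) := by push_cast; linarith
        exact_mod_cast this.le
    refine hlf.continuous ?_ (fun n => isClosed_Icc) ?_
    · rw [eq_univ_iff_forall]
      intro t
      exact mem_iUnion.2 ⟨⌊t⌋, Int.floor_le t, (Int.lt_floor_add_one t).le⟩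
    · intro n
      have : ContinuousOn (fun t : ℝ => (G ^ n) (α (t - n))) (Icc (n : ℝ) (n + 1)) :=
        ((G ^ n).continuous.comp (hα.comp (by fun_prop))).continuousOn
      exact this.congr (hγn n)
  · intro t
    simp only [γ, Int.floor_add_one, Int.fract_add_one, hstep']
  · intro t ht
    have := hγn 0 t (by simpa using ht)
    simpa using this

theorem bb_periodic (G : ℂ ≃ₜ ℂ) (hP : bbP G) (hfix : ∀ z, G z ≠ z) (z : ℂ) (n : ℕ)
    (hn : 1 ≤ n) (hz : (⇑G)^[n] z = z) : False := by
  obtain ⟨x, r, hr, hx, hGx, hA, hB⟩ := bb_radius G hfix z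
  let α : ℝ → ℂ := fun t => z + ((max 0 (1 - 2 * t) : ℝ) : ℂ) * (x - z)
    + ((max 0 (2 * t - 1) : ℝ) : ℂ) * (G x - z)
  have hα : Continuous α := by fun_prop
  have α0 : α 0 = x := by simp [α]
  have α1 : α 1 = G x := by simp [α]; norm_num
  have αh : α (1/2) = z := by simp [α]
  have αl : ∀ t, t ≤ 1/2 → α t = z + ((1 - 2 * t : ℝ) : ℂ) * (x - z) := by
    intro t ht
    simp only [α]
    rw [max_eq_right (by linarith), max_eq_left (by linarith)]; simp
  have αr : ∀ t, 1/2 ≤ t → α t = z + ((2 * t - 1 : ℝ) : ℂ) * (G x - z) := by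
    intro t ht
    simp only [α]
    rw [max_eq_left (by linarith), max_eq_right (by linarith)]; simp
  have αd : ∀ t, dist (α t) z = |1 - 2 * t| * r := by
    intro t
    rcases le_total t (1/2) with h | h
    · rw [αl t h, dist_eq_norm, add_sub_cancel_left, norm_mul, ← dist_eq_norm x z, hx,
        Complex.norm_real, Real.norm_eq_abs]
    · rw [αr t h, dist_eq_norm, add_sub_cancel_left, norm_mul, ← dist_eq_norm (G x) z, hGx,
        Complex.norm_real, Real.norm_eq_abs, abs_sub_comm]
  have αd1 : ∀ t ∈ Icc (0:ℝ) 1, dist (α t) z ≤ r := by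
    rintro t ⟨h0, h1⟩
    rw [αd]
    have : |1 - 2 * t| ≤ 1 := abs_le.2 ⟨by linarith, by linarith⟩
    nlinarith
  have αd2 : ∀ t ∈ Icc (0:ℝ) 1, r ≤ dist (α t) z → t = 0 ∨ t = 1 := by
    rintro t ⟨h0, h1⟩ h
    rw [αd] at h
    have : 1 ≤ |1 - 2 * t| := by
      by_contra hh
      push Not at hh
      nlinarith
    rcases le_abs.1 this with h | h
    · left; linarith
    · right; linarith
  have αinj : ∀ s t, 0 ≤ s → s < t → t ≤ 1 → α s ≠ α t := by
    intro s t h0 hst h1 he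
    have hd : |1 - 2 * s| * r = |1 - 2 * t| * r := by rw [← αd, ← αd, he]
    have hd' := mul_right_cancel₀ hr.ne' hd
    rcases abs_eq_abs.1 hd' with h | h
    · linarith
    · rw [αl s (by linarith), αr t (by linarith), h] at he
      have h3 : ((-(1 - 2 * t) : ℝ) : ℂ) ≠ 0 := by
        norm_cast; intro h4; linarith
      rw [show (2 * t - 1 : ℝ) = -(1 - 2 * t) by ring] at he
      have := mul_left_cancel₀ h3 (add_left_cancel he)
      exact hfix x (sub_left_injective this).symm
  have αG : ∀ s ∈ Icc (0:ℝ) 1, ∀ t ∈ Icc (0:ℝ) 1, α s = G (α t) →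
      (s = 1 ∧ t = 0) ∨ (s = 0 ∧ t = 1) := by
    intro s hs t ht he
    have h1 := αd2 s hs (by rw [he]; exact hA _ (αd1 t ht))
    have h2 := αd2 t ht (hB _ (by rw [← he]; exact αd1 s hs))
    rcases h1 with rfl | rfl <;> rcases h2 with rfl | rfl
    · exact absurd he.symm (hfix _)
    · right; simp
    · left; simp
    · exact absurd he.symm (hfix _)
  obtain ⟨γ, hγ, hs, hγα⟩ := bb_line G α hα (by rw [α1, α0])
  have hsn : ∀ (k : ℕ) t, γ (t + k) = (⇑G)^[k] (γ t) := by
    intro k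
    induction k with
    | zero => simp
    | succ k ih =>
      intro t
      rw [Function.iterate_succ_apply', ← ih, ← hs]; congr 1; push_cast; ring
  have hback : ∀ s t, γ (s + 1) = γ (t + 1) → γ s = γ t := by
    intro s t h; rw [hs, hs] at h; exact G.injective h
  have hbackn : ∀ (k : ℕ) s t, γ (s + k) = γ (t + k) → γ s = γ t := by
    intro k s t h; rw [hsn, hsn] at h; exact G.injective.iterate k h
  have hb : ∀ s t, 0 ≤ s → s ≤ 1 → 1 ≤ t → t ≤ 2 → γ s = γ t →
      (s = 1 ∧ t = 1) ∨ (s = 0 ∧ t = 2) := by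
    intro s t h1 h2 h3 h4 h
    have e := hs (t - 1)
    rw [sub_add_cancel, hγα (t - 1) ⟨by linarith, by linarith⟩, ← h, hγα s ⟨h1, h2⟩] at e
    rcases αG s ⟨h1, h2⟩ (t - 1) ⟨by linarith, by linarith⟩ e with ⟨a, b⟩ | ⟨a, b⟩
    · left; exact ⟨a, by linarith⟩
    · right; exact ⟨a, by linarith⟩
  -- collisions are far
  have far : ∀ s t, 0 ≤ s → s < t → γ s = γ t → 1 < t - s := by
    intro s t h0 hst he
    by_contra hle
    push Not at hle
    obtain ⟨k, hk⟩ : ∃ k : ℕ, (k : ℝ) ≤ s ∧ s < k + 1 :=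
      ⟨⌊s⌋₊, Nat.floor_le h0, Nat.lt_floor_add_one s⟩
    have e := hbackn k (s - k) (t - k) (by simpa using he)
    rcases le_total (t - k) 1 with h | h
    · rw [hγα _ ⟨by linarith [hk.1], by linarith [hk.2]⟩,
        hγα _ ⟨by linarith [hk.1], h⟩] at e
      exact αinj _ _ (by linarith [hk.1]) (by linarith) h e
    · rcases hb _ _ (by linarith [hk.1]) (by linarith [hk.2]) h (by linarith [hk.2]) e with h | h
      · linarith [h.1, h.2]
      · linarith [h.1, h.2]
  -- first collision
  let Z : Set (ℝ × ℝ) := {p | 0 ≤ p.1 ∧ p.1 + 1 ≤ p.2 ∧ p.2 ≤ n + 1/2 ∧ γ p.1 = γ p.2}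
  have hZc : IsCompact Z := by
    refine IsCompact.of_isClosed_subset (isCompact_Icc (a := (0:ℝ)) (b := n + 1/2) |>.prod
      (isCompact_Icc (a := (0:ℝ)) (b := n + 1/2))) ?_ ?_
    · have c1 : IsClosed {p : ℝ × ℝ | 0 ≤ p.1} := isClosed_le (by fun_prop) (by fun_prop)
      have c2 : IsClosed {p : ℝ × ℝ | p.1 + 1 ≤ p.2} := isClosed_le (by fun_prop) (by fun_prop)
      have c3 : IsClosed {p : ℝ × ℝ | p.2 ≤ n + 1/2} := isClosed_le (by fun_prop) (by fun_prop)
      have c4 : IsClosed {p : ℝ × ℝ | γ p.1 = γ p.2} := isClosed_eq (by fun_prop) (by fun_prop)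
      exact c1.inter (c2.inter (c3.inter c4))
    · rintro ⟨s, t⟩ ⟨h1, h2, h3, h4⟩
      simp only at h1 h2 h3
      exact ⟨⟨h1, by simp only; linarith⟩, ⟨by simp only; linarith, h3⟩⟩
  have hZn : Z.Nonempty := by
    refine ⟨(1/2, 1/2 + n), by norm_num, ?_, ?_, ?_⟩
    · have : (1:ℝ) ≤ n := by exact_mod_cast hn
      simp only; linarith
    · simp only; linarith
    · simp only
      rw [hsn, hγα (1/2) ⟨by norm_num, by norm_num⟩, αh, hz]
  obtain ⟨⟨S, T⟩, ⟨hS0, hST, hTn, hcol⟩, hmin⟩ := hZc.exists_isMinOn hZn continuous_snd.continuousOn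
  simp only at hS0 hST hTn hcol
  have first : ∀ s t, 0 ≤ s → s < t → γ s = γ t → T ≤ t := by
    intro s t h0 hst he
    by_contra hlt
    push Not at hlt
    have := far s t h0 hst he
    have h := hmin (show (s, t) ∈ Z from ⟨h0, by simp only; linarith, by simp only; linarith, he⟩)
    simp only [mem_ofPred_eq] at h
    linarith
  have hST1 := far S T hS0 (by linarith) hcol
  have hS1 : S < 1 := by
    by_contra h
    push Not at h
    have := first (S - 1) (T - 1) (by linarith) (by linarith) (hback _ _ (by simpa using hcol))
    linarith
  have hT2 : 2 ≤ T := by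
    by_contra h
    push Not at h
    rcases hb S T hS0 hS1.le (by linarith) h.le hcol with h | h <;> linarith [h.1, h.2]
  refine bb_core G G.continuous hP hfix (fun t => γ (t + S)) (by fun_prop) ?_ (T - S) hST1 ?_ ?_ ?_
  · intro t; rw [← hs]; congr 1; ring
  · simp [hcol]
  · intro s t h0 hst htT hlt he
    have h1 := first _ _ (by linarith) (by linarith) he
    have h2 : t + S = T := by linarith
    rw [h2, ← hcol] at he
    have := first S (s + S) hS0 (by linarith) he.symm
    linarith
  · intro s t a1 a2 a3 a4 he
    have := hback (s + S - 1) (t + S - 1) (by simpa using he)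
    rcases hb _ _ (by linarith) (by linarith) (by linarith) (by linarith) this with h | h <;>
      linarith [h.1, h.2]

theorem bb_push (c w : ℂ) (ρ : ℝ) (hρ : 0 < ρ) (hw : ‖w‖ < ρ) :
    ∃ φ : ℂ ≃ₜ ℂ, bbP φ ∧ φ c = c + w ∧ (∀ v, ρ ≤ dist v c → φ v = v) ∧
      ∀ v, dist v c < ρ → dist (φ v) c < ρ := by
  let ψ : ℂ → ℝ := fun v => max 0 (1 - dist v c / ρ)
  have hψ : ∀ x y, |ψ y - ψ x| ≤ dist y x / ρ := by
    intro x y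
    have h1 : |ψ y - ψ x| ≤ |(1 - dist y c / ρ) - (1 - dist x c / ρ)| := by
      have := abs_max_sub_max_le_abs (1 - dist y c / ρ) (1 - dist x c / ρ) 0
      simpa only [ψ, max_comm (0:ℝ)] using this
    refine h1.trans ?_
    rw [show (1 - dist y c / ρ) - (1 - dist x c / ρ) = (dist x c - dist y c) / ρ by ring,
      abs_div, abs_of_pos hρ]
    gcongr
    rw [dist_comm y x]
    exact abs_dist_sub_le x y c
  have hψc : Continuous ψ := by fun_prop
  let k : ℝ := ‖w‖ / ρ
  have hk0 : 0 ≤ k := by positivity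
  have hk : k < 1 := (div_lt_one hρ).2 hw
  let F : ℂ → ℂ := fun v => v + (ψ v : ℂ) * w
  have hFl : ∀ x y, ‖((ψ y - ψ x : ℝ) : ℂ) * w‖ ≤ k * ‖y - x‖ := by
    intro x y
    rw [norm_mul, Complex.norm_real, Real.norm_eq_abs]
    calc |ψ y - ψ x| * ‖w‖ ≤ dist y x / ρ * ‖w‖ := by gcongr; exact hψ x y
      _ = k * ‖y - x‖ := by rw [dist_eq_norm]; simp only [k]; ring
  have hA : ApproximatesLinearOn F ((ContinuousLinearEquiv.refl ℝ ℂ : ℂ ≃L[ℝ] ℂ) : ℂ →L[ℝ] ℂ)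
      univ ⟨k, hk0⟩ := by
    intro x _ y _
    have := hFl y x
    have e : F x - F y - ((ContinuousLinearEquiv.refl ℝ ℂ : ℂ ≃L[ℝ] ℂ) : ℂ →L[ℝ] ℂ) (x - y)
        = ((ψ x - ψ y : ℝ) : ℂ) * w := by
      change (x + (ψ x : ℂ) * w) - (y + (ψ y : ℂ) * w) - (x - y) = _
      push_cast; ring
    rw [e]; exact this
  let φ : ℂ ≃ₜ ℂ := hA.toHomeomorph F (Or.inr (by
    have : ‖((ContinuousLinearEquiv.refl ℝ ℂ).symm : ℂ →L[ℝ] ℂ)‖₊ = 1 := by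
      simp
    rw [this, inv_one]
    exact_mod_cast hk))
  have hφ : ∀ v, φ v = v + (ψ v : ℂ) * w := fun v => rfl
  refine ⟨φ, ?_, ?_, ?_, ?_⟩
  · refine ⟨fun p => Complex.log (1 + ((ψ p.2 - ψ p.1 : ℝ) : ℂ) * w / (p.2 - p.1)), ?_, ?_, ?_⟩
    · refine ContinuousOn.clog ?_ ?_
      · refine ContinuousOn.add continuousOn_const (ContinuousOn.div (by fun_prop) (by fun_prop) ?_)
        intro p hp
        exact sub_ne_zero.2 (Ne.symm hp)
      · intro p hp
        have hp' : 0 < ‖p.2 - p.1‖ := norm_pos_iff.2 (sub_ne_zero.2 (Ne.symm hp))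
        apply Complex.mem_slitPlane_of_norm_lt_one
        rw [norm_div, div_lt_one hp']
        exact (hFl p.1 p.2).trans_lt (by nlinarith)
    · intro x y h
      have hp' : 0 < ‖y - x‖ := norm_pos_iff.2 (sub_ne_zero.2 (Ne.symm h))
      have hne : y - x ≠ 0 := sub_ne_zero.2 (Ne.symm h)
      rw [Complex.exp_log]
      · rw [hφ, hφ]; push_cast; field_simp; ring
      · apply Complex.slitPlane_ne_zero
        apply Complex.mem_slitPlane_of_norm_lt_one
        rw [norm_div, div_lt_one hp']
        exact (hFl x y).trans_lt (by nlinarith)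
    · intro x y h
      simp only
      congr 2
      rw [← neg_div_neg_eq]; push_cast; ring
  · rw [hφ]; simp [ψ]
  · intro v hv
    rw [hφ]
    have : ψ v = 0 := max_eq_left (by rw [sub_nonpos]; exact (one_le_div hρ).2 hv)
    simp [this]
  · intro v hv
    rw [hφ]
    have : ψ v = 1 - dist v c / ρ := max_eq_right (by rw [sub_nonneg]; exact (div_le_one hρ).2 hv.le)
    have h1 : 0 < 1 - dist v c / ρ := by rw [sub_pos]; exact (div_lt_one hρ).2 hv
    rw [dist_eq_norm, show v + (ψ v : ℂ) * w - c = (v - c) + (ψ v : ℂ) * w by ring]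
    refine (norm_add_le _ _).trans_lt ?_
    rw [norm_mul, Complex.norm_real, Real.norm_eq_abs, this, abs_of_pos h1, ← dist_eq_norm]
    have : (1 - dist v c / ρ) * ‖w‖ < (1 - dist v c / ρ) * ρ := by gcongr
    have e : (1 - dist v c / ρ) * ρ = ρ - dist v c := by field_simp
    linarith

theorem bb_closing (G : ℂ ≃ₜ ℂ) (hP : bbP G) (hfix : ∀ z, G z ≠ z) (c : ℂ) (ρ : ℝ) (hρ : 0 < ρ)
    (free : ∀ v, dist v c < ρ → ρ ≤ dist (G v) c)
    (hret : ∃ n : ℕ, 1 ≤ n ∧ ∃ z, (⇑G)^[n] z = c ∧ dist z c < ρ) : False := by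
  classical
  obtain ⟨hn, z, hz, hzc⟩ := Nat.find_spec hret
  have hmin := fun m => @Nat.find_min _ _ hret m
  set n := Nat.find hret with hndef
  obtain ⟨φ, hφP, hφc, hφo, hφi⟩ := bb_push c (z - c) ρ hρ (by rwa [← dist_eq_norm])
  have hit : ∀ i, i < n → (⇑(G.trans φ))^[i] z = (⇑G)^[i] z := by
    intro i
    induction i with
    | zero => simp
    | succ i ih =>
      intro hi
      rw [Function.iterate_succ_apply', Function.iterate_succ_apply', ih (by omega)]
      simp only [Homeomorph.trans_apply]
      apply hφo
      by_contra hlt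
      push Not at hlt
      refine hmin (n - (i + 1)) (by omega) ⟨by omega, (⇑G)^[i+1] z, ?_, ?_⟩
      · rw [← Function.iterate_add_apply, Nat.sub_add_cancel hi.le, hz]
      · rwa [Function.iterate_succ_apply']
  refine bb_periodic (G.trans φ) ?_ ?_ z n hn ?_
  · change bbP (φ ∘ G)
    exact bbP_comp hφP hP G.continuous G.injective
  · intro v hv
    simp only [Homeomorph.trans_apply] at hv
    rcases le_or_gt ρ (dist (G v) c) with h | h
    · rw [hφo _ h] at hv; exact hfix v hv
    · have h1 := hφi _ h
      rw [hv] at h1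
      exact absurd (free v h1) (not_le.2 h)
  · obtain ⟨m, hm⟩ : ∃ m, n = m + 1 := ⟨n - 1, by omega⟩
    rw [hm, Function.iterate_succ_apply', hit m (by omega)]
    simp only [Homeomorph.trans_apply]
    rw [← Function.iterate_succ_apply' G m z, Nat.succ_eq_add_one, ← hm, hz, hφc]; ring

/-- If some small ball returns to itself, there is a fixed point. -/
theorem bb_fixed (G : ℂ ≃ₜ ℂ) (hP : bbP G)
    (hret : ∀ c : ℂ, ∀ ρ > 0, ∃ n : ℕ, 1 ≤ n ∧ ∃ z, dist z c < ρ ∧ dist ((⇑G)^[n] z) c < ρ) :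
    ∃ z, G z = z := by
  by_contra hno
  push Not at hno
  have hd : 0 < dist (G 0) 0 := dist_pos.2 (hno 0)
  -- a free ball around 0
  obtain ⟨δ, hδ, hδ'⟩ := Metric.continuousAt_iff.1 (G.continuous.continuousAt (x := 0))
    (dist (G 0) 0 / 2) (by positivity)
  let η := min (δ / 2) (dist (G 0) 0 / 4)
  have hη : 0 < η := by positivity
  have hη1 : η ≤ δ / 2 := min_le_left _ _
  have hη2 : η ≤ dist (G 0) 0 / 4 := min_le_right _ _
  obtain ⟨n, hn, z, hz, hz'⟩ := hret 0 (η / 4) (by positivity)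
  refine bb_closing G hP hno ((⇑G)^[n] z) (η / 2) (by positivity) ?_ ⟨n, hn, z, rfl, ?_⟩
  · intro v hv
    by_contra hlt
    push Not at hlt
    have h1 : dist v 0 < δ := by
      linarith [dist_triangle v ((⇑G)^[n] z) 0]
    have h2 := hδ' h1
    have h3 : dist (G v) 0 < η := by linarith [dist_triangle (G v) ((⇑G)^[n] z) 0]
    have h4 := dist_triangle (G 0) (G v) 0
    rw [dist_comm (G 0) (G v)] at h4
    linarith
  · rw [dist_comm] at hz'
    linarith [dist_triangle z 0 ((⇑G)^[n] z)]

theorem bb_coe_int (x : ℝ) (k : ℤ) : ((x + k : ℝ) : T1) = (x : T1) := by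
  rw [AddCircle.coe_add]
  have : ((k : ℝ) : T1) = 0 := (AddCircle.coe_eq_zero_iff 1).2 ⟨k, by simp⟩
  rw [this, add_zero]

theorem bb_coe_eq {x y : ℝ} (h : (x : T1) = (y : T1)) : ∃ k : ℤ, y = x + k := by
  have : ((y - x : ℝ) : T1) = 0 := by rw [AddCircle.coe_sub, h, sub_self]
  obtain ⟨k, hk⟩ := (AddCircle.coe_eq_zero_iff 1).1 this
  refine ⟨k, ?_⟩
  simp at hk
  linarith

theorem bb_pA_eq {u v : ℝ × ℝ} (h : pA u = pA v) : ∃ k : ℤ, v = u + ((k : ℝ), 0) := by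
  simp only [pA, Prod.mk.injEq] at h
  obtain ⟨h1, h2⟩ := h
  obtain ⟨k, hk⟩ := bb_coe_eq h1
  exact ⟨k, Prod.ext (by simpa using hk) (by simp [h2])⟩

theorem bb_pA_int (u : ℝ × ℝ) (k : ℤ) : pA (u + ((k : ℝ), 0)) = pA u := by
  simp only [pA, Prod.fst_add, Prod.snd_add, add_zero, bb_coe_int]

theorem bb_pA_cont : Continuous pA := by
  unfold pA
  exact ((AddCircle.isCoveringMap_coe (1:ℝ)).continuous.comp continuous_fst).prodMk continuous_snd

abbrev bbA : Type := {p : ℂ × ℂ // p.1 ≠ p.2}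

theorem bb_isotopy (f : Ann ≃ₜ Ann) (hiso : IsotopicToId f)
    (fc : (ℝ × ℝ) ≃ₜ (ℝ × ℝ)) (hlift : IsLift f fc) :
    bbP (fun w : ℂ => (⟨(fc (w.re, w.im)).1, (fc (w.re, w.im)).2⟩ : ℂ)) ∧
    ∀ z (k : ℤ), fc (z + ((k : ℝ), 0)) = fc z + ((k : ℝ), 0) := by
  obtain ⟨H, hH, H0, H1, Hg⟩ := hiso
  have cov := AddCircle.isCoveringMap_coe (1:ℝ)
  have hHc : Continuous fun p : unitInterval × (ℝ × ℝ) => H ((p.1 : ℝ), pA p.2) :=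
    hH.comp_continuous (by have := bb_pA_cont; fun_prop) (fun p => ⟨p.1.2, trivial⟩)
  let Hm : C(unitInterval × (ℝ × ℝ), T1) := ⟨fun p => (H ((p.1 : ℝ), pA p.2)).1, hHc.fst⟩
  let st : C(ℝ × ℝ, ℝ) := ⟨fun z => z.1, continuous_fst⟩
  have hst : ∀ a, Hm (0, a) = ((st a : ℝ) : T1) := by
    intro a
    simp [Hm, st, H0, pA]
  let X := cov.liftHomotopy Hm st hst
  have hX : ∀ p, ((X p : ℝ) : T1) = (H ((p.1 : ℝ), pA p.2)).1 := fun p =>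
    congrFun (cov.liftHomotopy_lifts Hm st hst) p
  have hX0 : ∀ a, X (0, a) = a.1 := cov.liftHomotopy_zero Hm st hst
  have hXT : ∀ t z (k : ℤ), X (t, z + ((k : ℝ), 0)) = X (t, z) + k := by
    intro t z k
    have := cov.eq_of_comp_eq (A := unitInterval) (g₁ := fun t => X (t, z + ((k : ℝ), 0)))
      (g₂ := fun t => X (t, z) + k) (by fun_prop) (by fun_prop) ?_ 0 ?_
    · exact congrFun this t
    · ext t
      simp only [Function.comp]
      rw [bb_coe_int, hX, hX, bb_pA_int]
    · simp [hX0]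
  have hinj : ∀ (t : unitInterval) u v, X (t, u) = X (t, v) →
      (H ((t : ℝ), pA u)).2 = (H ((t : ℝ), pA v)).2 → u = v := by
    intro t u v h1 h2
    have h3 : H ((t : ℝ), pA u) = H ((t : ℝ), pA v) :=
      Prod.ext (by rw [← hX (t, u), ← hX (t, v), h1]) h2
    obtain ⟨g, hg⟩ := Hg t t.2
    rw [hg, hg] at h3
    obtain ⟨k, hk⟩ := bb_pA_eq (g.injective h3)
    rw [hk, hXT] at h1
    have : (k : ℝ) = 0 := by linarith
    rw [hk, this]; simp
  have hfc1 : ∀ z, X (1, z) = (fc z).1 + (X (1, 0) - (fc 0).1) := by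
    intro z
    obtain ⟨k, hk⟩ : ∃ k : ℤ, X (1, 0) = (fc 0).1 + k := by
      apply bb_coe_eq
      rw [hX]
      have := congrArg Prod.fst (hlift 0)
      simp only [pA] at this
      rw [this]
      simp [H1, pA]
    have := cov.eq_of_comp_eq (A := ℝ × ℝ) (g₁ := fun z => X (1, z))
      (g₂ := fun z => (fc z).1 + (X (1, 0) - (fc 0).1)) (by fun_prop) (by fun_prop) ?_ 0 (by ring)
    · exact congrFun this z
    · ext z
      simp only [Function.comp]
      rw [hk, add_sub_cancel_left, bb_coe_int, hX]
      have := congrArg Prod.fst (hlift z)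
      simp only [pA] at this
      rw [this]
      simp [H1, pA]
  have hfc2 : ∀ z, (fc z).2 = (H (1, pA z)).2 := by
    intro z
    rw [H1, ← hlift z]; rfl
  constructor
  · let h : unitInterval × ℂ → ℂ := fun p =>
      (X (p.1, (p.2.re, p.2.im)) : ℂ) + ((H ((p.1 : ℝ), pA (p.2.re, p.2.im))).2 : ℂ) * Complex.I
    have hre : ∀ p, (h p).re = X (p.1, (p.2.re, p.2.im)) := by intro p; simp [h]
    have him : ∀ p, (h p).im = (H ((p.1 : ℝ), pA (p.2.re, p.2.im))).2 := by intro p; simp [h]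
    have hh : Continuous h := by
      have e : Continuous fun p : unitInterval × ℂ => (p.1, (p.2.re, p.2.im)) := by fun_prop
      have e1 := X.continuous.comp e
      have e2 := (hHc.comp e).snd
      exact (Complex.continuous_ofReal.comp e1).add
        ((Complex.continuous_ofReal.comp e2).mul continuous_const)
    have hhi : ∀ t x y, h (t, x) = h (t, y) → x = y := by
      intro t x y he
      have a1 := congrArg Complex.re he
      have a2 := congrArg Complex.im he
      rw [hre, hre] at a1
      rw [him, him] at a2
      have := hinj t _ _ a1 a2
      simp only [Prod.mk.injEq] at this
      exact Complex.ext this.1 this.2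
    have hh0 : ∀ x, h (0, x) = x := by
      intro x
      apply Complex.ext
      · rw [hre, hX0]
      · rw [him]; simp [H0, pA]
    have hA : ∀ p : bbA, p.1.2 - p.1.1 ≠ 0 := fun p => sub_ne_zero.2 p.2.symm
    let Q : C(unitInterval × bbA, {z : ℂ // z ≠ 0}) :=
      ⟨fun p => ⟨(h (p.1, p.2.1.2) - h (p.1, p.2.1.1)) / (p.2.1.2 - p.2.1.1),
        div_ne_zero (sub_ne_zero.2 fun he => p.2.2 (hhi _ _ _ he).symm) (hA p.2)⟩, by
        refine Continuous.subtype_mk ?_ _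
        have e2 : Continuous fun p : unitInterval × bbA => p.2.1.2 :=
          continuous_snd.comp (continuous_subtype_val.comp continuous_snd)
        have e1 : Continuous fun p : unitInterval × bbA => p.2.1.1 :=
          continuous_fst.comp (continuous_subtype_val.comp continuous_snd)
        exact Continuous.div ((hh.comp (continuous_fst.prodMk e2)).sub
          (hh.comp (continuous_fst.prodMk e1))) (e2.sub e1) (fun p => hA p.2)⟩
    let q0 : C(bbA, ℂ) := ⟨fun _ => 0, continuous_const⟩
    have hq0 : ∀ a, Q (0, a) = (⟨Complex.exp (q0 a), Complex.exp_ne_zero _⟩ : {z : ℂ // z ≠ 0}) := by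
      intro a
      apply Subtype.ext
      simp [Q, q0, hh0, div_self (hA a)]
    let L := Complex.isCoveringMap_exp.liftHomotopy Q q0 hq0
    have hL : ∀ p, Complex.exp (L p) = (Q p : ℂ) := fun p =>
      congrArg Subtype.val (congrFun (Complex.isCoveringMap_exp.liftHomotopy_lifts Q q0 hq0) p)
    have hL0 : ∀ a, L (0, a) = 0 := Complex.isCoveringMap_exp.liftHomotopy_zero Q q0 hq0
    have hsym : ∀ (t : unitInterval) (a : bbA), L (t, a) = L (t, ⟨(a.1.2, a.1.1), a.2.symm⟩) := by
      intro t a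
      have := Complex.isCoveringMap_exp.eq_of_comp_eq (A := unitInterval) (g₁ := fun t => L (t, a))
        (g₂ := fun t => L (t, ⟨(a.1.2, a.1.1), a.2.symm⟩)) (by fun_prop) (by fun_prop) ?_ 0 ?_
      · exact congrFun this t
      · ext t
        simp only [Function.comp]
        rw [hL, hL]
        simp only [Q, ContinuousMap.coe_mk]
        rw [← neg_div_neg_eq]; ring
      · simp [hL0]
    classical
    refine ⟨fun p => if hp : p.1 ≠ p.2 then L (1, ⟨p, hp⟩) else 0, ?_, ?_, ?_⟩
    · rw [continuousOn_iff_continuous_domRestrict]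
      have : Set.domRestrict {p : ℂ × ℂ | p.1 ≠ p.2}
          (fun p => if hp : p.1 ≠ p.2 then L (1, ⟨p, hp⟩) else 0) =
          fun a : {p : ℂ × ℂ | p.1 ≠ p.2} => L (1, ⟨a.1, a.2⟩) := by
        ext a
        have := a.2
        simp only [mem_ofPred_eq] at this
        simp [Set.domRestrict, this]
      rw [this]
      exact L.continuous.comp (continuous_const.prodMk (Continuous.subtype_mk continuous_subtype_val _))
    · intro x y hxy
      simp only [ne_eq, hxy, not_false_eq_true, dite_true]
      rw [hL]
      simp only [Q, ContinuousMap.coe_mk]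
      rw [div_mul_cancel₀ _ (sub_ne_zero.2 (Ne.symm hxy))]
      apply Complex.ext
      · simp only [Complex.sub_re]
        rw [hre, hre, hfc1 (y.re, y.im), hfc1 (x.re, x.im)]; ring
      · simp only [Complex.sub_im]
        rw [him, him, hfc2 (y.re, y.im), hfc2 (x.re, x.im)]; simp
    · intro x y hxy
      simp only [ne_eq, hxy, Ne.symm hxy, not_false_eq_true, dite_true]
      exact hsym 1 ⟨(x, y), hxy⟩
  · intro z k
    have e1 := hfc1 (z + ((k : ℝ), 0))
    have e2 := hfc1 z
    rw [hXT] at e1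
    refine Prod.ext ?_ ?_
    · simp only [Prod.fst_add]; linarith
    · simp only [Prod.snd_add, add_zero]
      rw [hfc2, hfc2, bb_pA_int]

theorem bb_unif (fc : (ℝ × ℝ) ≃ₜ (ℝ × ℝ)) (x : ℝ) (hrot : rot fc = {(x : EReal)})
    (K : Set Ann) (hK : IsCompact K) (ε : ℝ) (hε : 0 < ε) :
    ∃ N : ℕ, ∀ n ≥ N, ∀ z, pA z ∈ K → pA ((⇑fc)^[n] z) ∈ K →
      |(((⇑fc)^[n] z).1 - z.1) / (n : ℝ) - x| ≤ ε := by
  by_contra hcon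
  push Not at hcon
  choose n hn z h1 h2 h3 using hcon
  have hnt : Tendsto n atTop atTop := tendsto_atTop_mono hn tendsto_id
  obtain ⟨ρ, φ, hφ, hρ⟩ := CompactSpace.tendsto_subseq
    (fun k => (((((⇑fc)^[n k] (z k)).1 - (z k).1) / (n k) : ℝ) : EReal))
  have hmem : ρ ∈ rot fc := by
    apply subset_closure
    simp only [mem_iUnion]
    exact ⟨K, hK, z ∘ φ, n ∘ φ, hnt.comp hφ.tendsto_atTop, fun k => ⟨h1 _, h2 _⟩, hρ⟩
  rw [hrot, mem_singleton_iff] at hmem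
  subst hmem
  have hρ' := EReal.tendsto_coe.1 hρ
  have := (hρ'.sub_const x).abs
  rw [sub_self, abs_zero] at this
  obtain ⟨k, hk⟩ := (this.eventually (gt_mem_nhds hε)).exists
  exact absurd hk (not_lt.2 (h3 _).le)

theorem bb_visit {α : Type} [MeasurableSpace α] (μ : Measure α) [IsProbabilityMeasure μ]
    (F : α → α) (hF : MeasurePreserving F μ μ) (U : Set α) (hU : MeasurableSet U) (N : ℕ) :
    ∃ (a : α) (V : Finset ℕ), (∀ n ∈ V, n < N ∧ F^[n] a ∈ U) ∧ N * μ.real U ≤ (V.card : ℝ) := by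
  classical
  let φ : α → ENNReal := fun a => ∑ n ∈ Finset.range N, ((F^[n]) ⁻¹' U).indicator 1 a
  have hm : ∀ n, MeasurableSet ((F^[n]) ⁻¹' U) := fun n => (hF.iterate n).measurable hU
  have hint : ∫⁻ a, φ a ∂μ = N * μ U := by
    simp only [φ]
    rw [lintegral_finsetSum _ (fun n _ => measurable_one.indicator (hm n))]
    simp only [lintegral_indicator_one (hm _), (hF.iterate _).measure_preimage hU.nullMeasurableSet]
    simp
  have hφm : AEMeasurable φ μ :=
    (Finset.measurable_sum _ (fun n _ => measurable_one.indicator (hm n))).aemeasurable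
  obtain ⟨a, ha⟩ := exists_lintegral_le (μ := μ) (f := φ)
    (by rw [hint]; exact ENNReal.mul_ne_top (by simp) (measure_ne_top _ _))
  refine ⟨a, (Finset.range N).filter (fun n => F^[n] a ∈ U), by simp, ?_⟩
  have hc : φ a = ((Finset.range N).filter (fun n => F^[n] a ∈ U)).card := by
    simp only [φ, Finset.card_filter, Set.indicator, mem_preimage, Pi.one_apply]
    push_cast
    rfl
  rw [hint, hc] at ha
  have := ENNReal.toReal_mono (by simp) ha
  simpa [Measure.real] using this

theorem bb_pA_open : IsOpenMap pA := by
  have h : IsOpenMap (fun x : ℝ => (x : T1)) := QuotientAddGroup.isOpenMap_coe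
  exact h.prodMap IsOpenMap.id

theorem bb_rec (f : Ann ≃ₜ Ann) (μ : Measure Ann) (hμ : InvariantFullMeasure f μ)
    (fc : (ℝ × ℝ) ≃ₜ (ℝ × ℝ)) (hlift : IsLift f fc)
    (hT : ∀ z (k : ℤ), fc (z + ((k : ℝ), 0)) = fc z + ((k : ℝ), 0))
    (r : ℤ) (q : ℕ) (hq : 1 ≤ q) (hrot : rot fc = {(((r : ℝ) / (q : ℝ) : ℝ) : EReal)})
    (g : ℝ × ℝ → ℝ × ℝ) (hg : ∀ z, g z = (⇑fc)^[q] z - ((r : ℝ), 0))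
    (D : Set (ℝ × ℝ)) (hD : IsOpen D) (c : ℝ × ℝ) (hc : c ∈ D) :
    ∃ n : ℕ, 1 ≤ n ∧ ∃ z ∈ D, g^[n] z ∈ D := by
  obtain ⟨hprob, hmap, hfull⟩ := hμ
  obtain ⟨ρ0, hρ0, hball⟩ := Metric.isOpen_iff.1 hD c hc
  obtain ⟨ρ, hρ, hρ1, hρ2⟩ : ∃ ρ > 0, ρ ≤ ρ0 ∧ ρ ≤ 1/4 :=
    ⟨min ρ0 (1/4), by positivity, min_le_left _ _, min_le_right _ _⟩
  have hqR : (0:ℝ) < q := by exact_mod_cast hq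
  -- translations
  have hTn : ∀ n z (k : ℤ), (⇑fc)^[n] (z + ((k : ℝ), 0)) = (⇑fc)^[n] z + ((k : ℝ), 0) := by
    intro n
    induction n with
    | zero => intro z k; rfl
    | succ n ih => intro z k; rw [Function.iterate_succ_apply, Function.iterate_succ_apply, hT, ih]
  have hgT : ∀ z (k : ℤ), g (z + ((k : ℝ), 0)) = g z + ((k : ℝ), 0) := by
    intro z k; rw [hg, hg, hTn]; abel
  have hgTn : ∀ n z (k : ℤ), g^[n] (z + ((k : ℝ), 0)) = g^[n] z + ((k : ℝ), 0) := by
    intro n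
    induction n with
    | zero => intro z k; rfl
    | succ n ih => intro z k; rw [Function.iterate_succ_apply, Function.iterate_succ_apply, hgT, ih]
  have hfg : ∀ z, (⇑fc)^[q] z = g z + ((r : ℝ), 0) := by intro z; rw [hg]; abel
  have hfgn : ∀ k z, (⇑fc)^[q * k] z = g^[k] z + (((k * r : ℤ) : ℝ), 0) := by
    intro k
    induction k with
    | zero => intro z; ext <;> simp
    | succ k ih =>
      intro z
      rw [Nat.mul_succ, Function.iterate_add_apply, hfg, hTn, ih, Function.iterate_succ_apply]
      ext
      · simp; ring
      · simp
  have hpl : ∀ n z, pA ((⇑fc)^[n] z) = (⇑f)^[n] (pA z) := by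
    intro n
    induction n with
    | zero => intro z; rfl
    | succ n ih => intro z; rw [Function.iterate_succ_apply, Function.iterate_succ_apply, ih, hlift]
  have hpg : ∀ k z, pA (g^[k] z) = ((⇑f)^[q])^[k] (pA z) := by
    intro k z
    rw [← Function.iterate_mul, ← hpl, hfgn, bb_pA_int]
  let U : Set Ann := pA '' Metric.ball c ρ
  let K : Set Ann := pA '' Metric.closedBall c ρ
  have hUo : IsOpen U := bb_pA_open _ Metric.isOpen_ball
  have hK : IsCompact K := (isCompact_closedBall c ρ).image bb_pA_cont
  have hUK : ∀ w ∈ Metric.ball c ρ, pA w ∈ K := fun w hw =>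
    ⟨w, Metric.ball_subset_closedBall hw, rfl⟩
  have hp : 0 < μ.real U :=
    ENNReal.toReal_pos (hfull U hUo ⟨_, c, Metric.mem_ball_self hρ, rfl⟩).ne' (measure_ne_top _ _)
  set p := μ.real U with hpdef
  have hF : MeasurePreserving ((⇑f)^[q]) μ μ :=
    (⟨f.continuous.measurable, hmap⟩ : MeasurePreserving f μ μ).iterate q
  obtain ⟨N1, hN1⟩ := bb_unif fc _ hrot K hK (p / (8 * q)) (by positivity)
  obtain ⟨N, hN⟩ := exists_nat_gt (2 * ((N1 : ℝ) + 4) / p)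
  have hN' : 2 * ((N1 : ℝ) + 4) < p * N := by
    rw [div_lt_iff₀ hp] at hN; linarith
  obtain ⟨a, V, hV, hVc⟩ := bb_visit μ _ hF U hUo.measurableSet N
  obtain ⟨b, rfl⟩ : ∃ b, pA b = a := by
    obtain ⟨a1, a2⟩ := a
    obtain ⟨x, rfl⟩ := QuotientAddGroup.mk_surjective a1
    exact ⟨(x, a2), rfl⟩
  have hw : ∀ n, ∃ (w : ℝ × ℝ) (m : ℤ), n ∈ V → w ∈ Metric.ball c ρ ∧ g^[n] b = w + ((m : ℝ), 0) := by
    intro n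
    by_cases hn : n ∈ V
    · obtain ⟨w, hw, he⟩ := (hV n hn).2
      rw [← hpg] at he
      obtain ⟨m, hm⟩ := bb_pA_eq he
      exact ⟨w, m, fun _ => ⟨hw, hm⟩⟩
    · exact ⟨0, 0, fun h => absurd h hn⟩
  choose w m hwm using hw
  have hVne : V.Nonempty := by
    rw [← Finset.card_pos]
    have : (0:ℝ) < V.card := by nlinarith [Nat.cast_nonneg (α := ℝ) N1]
    exact_mod_cast this
  obtain ⟨n0, hn0, hmin⟩ := V.exists_min_image id hVne
  simp only [id] at hmin
  set B : ℤ := ⌊p * N / 8 + 1⌋ with hB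
  have hB0 : 0 ≤ B := Int.floor_nonneg.2 (by positivity)
  have key : ∀ n ∈ V, n0 + N1 ≤ n → |m n - m n0| ≤ B := by
    intro n hn hle
    rcases Nat.eq_or_lt_of_le (show n0 ≤ n by omega) with h0 | h0
    · rw [← h0]; simpa using hB0
    obtain ⟨k, rfl⟩ : ∃ k, n = k + n0 := ⟨n - n0, by omega⟩
    have hk : 1 ≤ k := by omega
    have hkR : (0:ℝ) < k := by exact_mod_cast hk
    obtain ⟨u1, u2⟩ := hwm n0 hn0
    obtain ⟨v1, v2⟩ := hwm _ hn
    rw [Function.iterate_add_apply] at v2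
    have := hN1 (q * k) (by nlinarith) (g^[n0] b) (by rw [u2, bb_pA_int]; exact hUK _ u1)
      (by rw [hfgn, bb_pA_int, v2, bb_pA_int]; exact hUK _ v1)
    rw [hfgn, v2, u2] at this
    simp only [Prod.fst_add] at this
    push_cast at this
    have e : ((w (k + n0)).1 + (m (k + n0) : ℝ) + (k : ℝ) * r - ((w n0).1 + (m n0 : ℝ))) / (q * k) - r / q
        = ((w (k + n0)).1 + (m (k + n0) : ℝ) - ((w n0).1 + (m n0 : ℝ))) / (q * k) := by
      field_simp; ring
    rw [e, abs_div, abs_of_pos (mul_pos hqR hkR), div_le_iff₀ (mul_pos hqR hkR)] at this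
    have e2 : p / (8 * q) * (q * k) = p * k / 8 := by field_simp
    rw [e2] at this
    have hkN : (k : ℝ) ≤ N := by
      have := (hV _ hn).1
      exact_mod_cast (show k ≤ N by omega)
    have hpk : p * k ≤ p * N := mul_le_mul_of_nonneg_left hkN hp.le
    rw [Metric.mem_ball, Prod.dist_eq, max_lt_iff, Real.dist_eq, abs_lt] at u1 v1
    rw [hB, Int.le_floor]
    push_cast
    rw [abs_le] at this ⊢
    constructor <;> linarith [u1.1.1, u1.1.2, v1.1.1, v1.1.2, this.1, this.2]
  let W := V.filter (fun n => n0 + N1 ≤ n)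
  have hWc : V.card ≤ W.card + N1 := by
    have hsub : V ⊆ W ∪ Finset.Ico n0 (n0 + N1) := by
      intro n hn
      by_cases h : n0 + N1 ≤ n
      · exact Finset.mem_union_left _ (Finset.mem_filter.2 ⟨hn, h⟩)
      · exact Finset.mem_union_right _ (Finset.mem_Ico.2 ⟨hmin n hn, by omega⟩)
    have := (Finset.card_le_card hsub).trans (Finset.card_union_le _ _)
    simpa using this
  have hcard : (Finset.Icc (m n0 - B) (m n0 + B)).card < W.card := by
    have h1 : ((Finset.Icc (m n0 - B) (m n0 + B)).card : ℤ) = 2 * B + 1 := by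
      rw [Int.card_Icc, Int.toNat_of_nonneg (by omega)]; ring
    have h1' : ((Finset.Icc (m n0 - B) (m n0 + B)).card : ℝ) = 2 * B + 1 := by exact_mod_cast h1
    have h2 : (B : ℝ) ≤ p * N / 8 + 1 := Int.floor_le _
    have h3 : (V.card : ℝ) ≤ W.card + N1 := by exact_mod_cast hWc
    have : ((Finset.Icc (m n0 - B) (m n0 + B)).card : ℝ) < W.card := by
      rw [h1']
      nlinarith [Nat.cast_nonneg (α := ℝ) N1]
    exact_mod_cast this
  have hpig : ∃ n ∈ W, ∃ n' ∈ W, n ≠ n' ∧ m n = m n' := by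
    refine Finset.exists_ne_map_eq_of_card_lt_of_maps_to hcard ?_
    intro n hn
    have hn' := Finset.mem_filter.1 hn
    have := abs_le.1 (key n hn'.1 hn'.2)
    simp only [Finset.coe_Icc, mem_Icc]
    constructor <;> linarith [this.1, this.2]
  have fin : ∀ n ∈ V, ∀ n' ∈ V, n < n' → m n = m n' → ∃ j : ℕ, 1 ≤ j ∧ ∃ z ∈ D, g^[j] z ∈ D := by
    intro n hn n' hn' hlt hm
    obtain ⟨j, rfl⟩ : ∃ j, n' = j + n := ⟨n' - n, by omega⟩
    obtain ⟨u1, u2⟩ := hwm n hn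
    obtain ⟨v1, v2⟩ := hwm _ hn'
    refine ⟨j, by omega, w n, hball (Metric.ball_subset_ball hρ1 u1), ?_⟩
    rw [Function.iterate_add_apply, u2, hgTn, hm] at v2
    rw [add_right_cancel v2]
    exact hball (Metric.ball_subset_ball hρ1 v1)
  obtain ⟨n, hn, n', hn', hne, hm⟩ := hpig
  have hn := (Finset.mem_filter.1 hn).1
  have hn' := (Finset.mem_filter.1 hn').1
  rcases lt_or_gt_of_ne hne with h | h
  · exact fin n hn n' hn' h hm
  · exact fin n' hn' n hn h hm.symm

theorem bb_main (f : Ann ≃ₜ Ann) (μ : Measure Ann)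
    (hiso : IsotopicToId f) (hμ : InvariantFullMeasure f μ)
    (fc : (ℝ × ℝ) ≃ₜ (ℝ × ℝ)) (hlift : IsLift f fc)
    (r s : ℤ) (hs : 1 ≤ s)
    (hrot : rot fc = {(((r : ℝ) / (s : ℝ) : ℝ) : EReal)}) :
    ∃ z : ℝ × ℝ, (⇑fc)^[s.toNat] z = z + ((r : ℝ), 0) := by
  obtain ⟨hP, hT⟩ := bb_isotopy f hiso fc hlift
  obtain ⟨q, rfl⟩ : ∃ q : ℕ, s = q := ⟨s.toNat, by omega⟩
  have hq : 1 ≤ q := by omega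
  simp only [Int.toNat_natCast]
  let e : ℂ ≃ₜ ℝ × ℝ := Complex.equivRealProdCLM.toHomeomorph
  have he : ∀ w, e w = (w.re, w.im) := fun w => rfl
  let h : ℂ ≃ₜ ℂ := (e.trans fc).trans e.symm
  have hh : (fun w : ℂ => (⟨(fc (w.re, w.im)).1, (fc (w.re, w.im)).2⟩ : ℂ)) = h := by
    ext w
    apply e.injective
    show _ = e (e.symm (fc (e w)))
    rw [e.apply_symm_apply, he, he]
  rw [hh] at hP
  have hhn : ∀ n w, e ((⇑h)^[n] w) = (⇑fc)^[n] (e w) := by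
    intro n
    induction n with
    | zero => intro w; rfl
    | succ n ih => intro w; rw [Function.iterate_succ_apply, Function.iterate_succ_apply, ih]; simp [h]
  let hn : ℂ ≃ₜ ℂ :=
    { toEquiv := (h.toEquiv : Equiv.Perm ℂ) ^ q
      continuous_toFun := by
        show Continuous ⇑((h.toEquiv : Equiv.Perm ℂ) ^ q)
        rw [Equiv.Perm.coe_pow]; exact h.continuous.iterate q
      continuous_invFun := by
        show Continuous ⇑((h.toEquiv : Equiv.Perm ℂ) ^ q)⁻¹
        rw [← inv_pow, Equiv.Perm.coe_pow]; exact h.symm.continuous.iterate q }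
  have hnq : ∀ w, hn w = (⇑h)^[q] w := fun w => by
    show ((h.toEquiv : Equiv.Perm ℂ) ^ q) w = _
    rw [Equiv.Perm.coe_pow]; rfl
  let G : ℂ ≃ₜ ℂ := hn.trans (Homeomorph.addRight (-(r : ℂ)))
  have hG : ∀ w, G w = (⇑h)^[q] w + (-(r : ℂ)) := fun w => by
    show hn w + (-(r : ℂ)) = _
    rw [hnq]
  have hGP : bbP G := by
    have := bbP_comp (bbP_add (-(r : ℂ))) (bbP_iterate hP h.continuous h.injective q)
      (h.continuous.iterate q) (h.injective.iterate q)
    convert this using 1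
    ext w
    rw [hG]; rfl
  let g : ℝ × ℝ → ℝ × ℝ := fun z => (⇑fc)^[q] z - ((r : ℝ), 0)
  have heG : ∀ w, e (G w) = g (e w) := by
    intro w
    rw [hG]
    simp only [g, ← hhn]
    rw [he, he]
    ext <;> simp [sub_eq_add_neg]
  have heGn : ∀ n w, e ((⇑G)^[n] w) = g^[n] (e w) := by
    intro n
    induction n with
    | zero => intro w; rfl
    | succ n ih => intro w; rw [Function.iterate_succ_apply, Function.iterate_succ_apply, ih, heG]
  have hrot' : rot fc = {(((r : ℝ) / (q : ℝ) : ℝ) : EReal)} := by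
    rw [hrot]; simp
  obtain ⟨z, hz⟩ := bb_fixed G hGP (by
    intro c ρ hρ
    obtain ⟨n, hn1, z, hz, hz'⟩ := bb_rec f μ hμ fc hlift hT r q hq hrot' g (fun _ => rfl)
      (e.symm ⁻¹' Metric.ball c ρ) (Metric.isOpen_ball.preimage e.symm.continuous) (e c)
      (by simpa using hρ)
    refine ⟨n, hn1, e.symm z, hz, ?_⟩
    have : (⇑G)^[n] (e.symm z) = e.symm (g^[n] z) := by
      apply e.injective
      rw [heGn]; simp
    rw [this]
    exact hz')
  refine ⟨e z, ?_⟩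
  have := heG z
  rw [hz] at this
  simp only [g] at this
  rw [eq_sub_iff_add_eq] at this
  exact this.symm

/-- If the rotation set of the lift `f̌` is reduced to a single rational number `r/s`,
then this rational number is realized by a periodic orbit. -/
theorem rotation_set_singleton_realized (f : Ann ≃ₜ Ann) (μ : Measure Ann)
    (hiso : IsotopicToId f) (hμ : InvariantFullMeasure f μ)
    (fc : (ℝ × ℝ) ≃ₜ (ℝ × ℝ)) (hlift : IsLift f fc)
    (r s : ℤ) (hs : 1 ≤ s) (hcop : Int.gcd r s = 1)
    (hrot : rot fc = {(((r : ℝ) / (s : ℝ) : ℝ) : EReal)}) :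
    ∃ z : ℝ × ℝ, (⇑fc)^[s.toNat] z = z + ((r : ℝ), 0) := by
  exact bb_main f μ hiso hμ fc hlift r s hs hrot
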